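/- arXiv:0811.2904 — 6 statements merged into one kernel-verified Lean document; each statement's English description precedes it below -/
import Mathlib

section
/- The gamma code of a natural number x uses 2⌊lg(x+1)⌋ + 2 bits. For any m ≥ 1 run lengths x_1, …, x_m (natural numbers) with Σ_{i=1}^m (x_i + 1) ≤ n, the total length of their gamma codes satisfies Σ_{i=1}^m (2·⌊log₂(x_i+1)⌋ + 2) ≤ 2m · lg(n/m) + 2m. (Run-length encoding with gamma codes compresses a bit string of length n with m ones to O(m lg(n/m) + m) bits.) -/
/-!
Since `⌊lg y⌋ ≤ lg y`, the bound is Jensen's inequality for the concave function `lg` at the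
values `x i + 1`, whose mean is at most `n / m`. It is obtained from `logb_two_le_tangent` with
the tangent point `n / m`: summing the tangent bounds uses the hypothesis on the total directly,
with no separate appeal to monotonicity of `lg`.
-/

/-- The tangent line of the concave function `lg` at `a` lies above its graph. -/
lemma logb_two_le_tangent {a y : ℝ} (ha : 0 < a) (hy : 0 < y) :
    Real.logb 2 y ≤ Real.logb 2 a + (y / a - 1) / Real.log 2 := by
  have h := Real.log_le_sub_one_of_pos (div_pos hy ha)
  rw [Real.log_div hy.ne' ha.ne'] at h
  have h2 : 0 < Real.log 2 := Real.log_pos one_lt_two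
  rw [Real.logb, Real.logb, ← add_div]
  gcongr
  linarith

/-- The gamma code of `x` uses `2⌊lg(x+1)⌋ + 2` bits. For run lengths `x 1, …, x m`
with `Σ (x i + 1) ≤ n`, the total gamma-code length is at most `2m·lg(n/m) + 2m`. -/
theorem gamma_code_total_length (n m : ℕ) (hm : 1 ≤ m) (x : Fin m → ℕ)
    (hsum : ∑ i, (x i + 1) ≤ n) :
    ∑ i, ((2 * Nat.log 2 (x i + 1) + 2 : ℕ) : ℝ) ≤
      2 * (m : ℝ) * Real.logb 2 ((n : ℝ) / (m : ℝ)) + 2 * m := by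
  have hmn : m ≤ n := by
    refine le_trans ?_ hsum
    simp [Finset.sum_add_distrib]
  have hm0 : (0 : ℝ) < m := by exact_mod_cast hm
  have hn0 : (0 : ℝ) < n := by exact_mod_cast hm.trans hmn
  have h2 : 0 < Real.log 2 := Real.log_pos one_lt_two
  have ha : (0 : ℝ) < n / m := div_pos hn0 hm0
  have hs : ∑ i, ((x i : ℝ) + 1) ≤ n := by exact_mod_cast hsum
  -- Bound each term by the tangent line of `lg` at the mean `n / m`.
  have key : ∀ i, ((2 * Nat.log 2 (x i + 1) + 2 : ℕ) : ℝ) ≤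
      2 * (Real.logb 2 (n / m) + (((x i : ℝ) + 1) / (n / m) - 1) / Real.log 2) + 2 := by
    intro i
    have h1 := Real.natLog_le_logb (x i + 1) 2
    have h3 := logb_two_le_tangent ha (y := (x i : ℝ) + 1) (by positivity)
    push_cast at h1 ⊢
    linarith
  refine (Finset.sum_le_sum fun i _ => key i).trans ?_
  -- The linear parts of the tangent bounds add up to something nonpositive.
  have hlin : (∑ i, ((x i : ℝ) + 1)) / (n / m) - m ≤ 0 := by
    rw [sub_nonpos, div_le_iff₀ ha, mul_div_cancel₀ _ hm0.ne']
    exact hs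
  have heq : ∑ i, (2 * (Real.logb 2 (n / m) +
      (((x i : ℝ) + 1) / (n / m) - 1) / Real.log 2) + 2) =
      2 * m * Real.logb 2 (n / m) + 2 * m +
        2 * (((∑ i, ((x i : ℝ) + 1)) / (n / m) - m) / Real.log 2) := by
    rw [Finset.sum_add_distrib, ← Finset.mul_sum, Finset.sum_add_distrib, ← Finset.sum_div,
      Finset.sum_sub_distrib, ← Finset.sum_div]
    simp only [Finset.sum_const, Finset.card_univ, Fintype.card_fin, nsmul_eq_mul]
    ring
  rw [heq]
  have := div_nonpos_of_nonpos_of_nonneg hlin h2.le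
  linarith
end

section
/- Let n ≥ 1 and t ≥ 1 be natural numbers and let m_1, …, m_t be natural numbers with Σ_{i=1}^t m_i ≤ n. Then Σ_{i=1}^t lg C(n, m_i) ≤ n · (lg t + 2). (The total size of optimally compressed bitmaps of t nodes at one level of the tree, whose cardinalities sum to at most n, is O(n lg t) bits; the sum is maximized when all cardinalities are equal.) -/
/-!
The bound follows from the Chernoff-style estimate `C(n, k) x ^ k ≤ (1 + x) ^ n ≤ exp (n x)`,
a single term of the binomial expansion being at most the whole. With `x = 1 / t` it reads
`log C(n, k) ≤ k log t + n / t`. Summing over the `t` cardinalities, whose total is at most `n`,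
gives `n log t + n`, and `1 / log 2 ≤ 2` converts this to base 2.
-/

theorem log_choose_le (n t k : ℕ) (ht : 1 ≤ t) (hk : k ≤ n) :
    Real.log (Nat.choose n k) ≤ k * Real.log t + n / t := by
  have ht0 : (0 : ℝ) < t := by exact_mod_cast ht
  have hc : (0 : ℝ) < Nat.choose n k := by exact_mod_cast Nat.choose_pos hk
  have hterm : ((t : ℝ)⁻¹) ^ k * Nat.choose n k ≤ ((t : ℝ)⁻¹ + 1) ^ n := by
    rw [add_pow]
    have := Finset.single_le_sum
      (f := fun j => ((t : ℝ)⁻¹) ^ j * 1 ^ (n - j) * (Nat.choose n j : ℝ))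
      (fun j _ => by positivity) (Finset.mem_range.2 (Nat.lt_succ_of_le hk))
    simpa using this
  have hlog := Real.log_le_log (by positivity) hterm
  rw [Real.log_mul (by positivity) hc.ne', Real.log_pow, Real.log_pow, Real.log_inv] at hlog
  have h1 : Real.log ((t : ℝ)⁻¹ + 1) ≤ (t : ℝ)⁻¹ := by
    linarith [Real.log_le_sub_one_of_pos (show (0 : ℝ) < (t : ℝ)⁻¹ + 1 by positivity)]
  have h2 := mul_le_mul_of_nonneg_left h1 (Nat.cast_nonneg (α := ℝ) n)
  rw [div_eq_mul_inv]
  linarith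

/-- If `m 1, …, m t` are cardinalities summing to at most `n`, then the total compressed
size `Σ lg C(n, m i)` is at most `n · (lg t + 2)`. -/
theorem sum_lg_choose_le (n t : ℕ) (hn : 1 ≤ n) (ht : 1 ≤ t) (m : Fin t → ℕ)
    (hsum : ∑ i, m i ≤ n) :
    ∑ i, Real.logb 2 (Nat.choose n (m i)) ≤ (n : ℝ) * (Real.logb 2 (t : ℝ) + 2) := by
  have ht0 : (0 : ℝ) < t := by exact_mod_cast ht
  have hl2 : (0.5 : ℝ) < Real.log 2 := by linarith [Real.log_two_gt_d9]
  have hm : ∀ i, m i ≤ n := fun i =>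
    (Finset.single_le_sum (fun j _ => Nat.zero_le (m j)) (Finset.mem_univ i)).trans hsum
  have hnat : ∑ i, Real.log (Nat.choose n (m i)) ≤ n * Real.log t + n := by
    calc ∑ i, Real.log (Nat.choose n (m i))
        ≤ ∑ i, ((m i : ℝ) * Real.log t + n / t) :=
          Finset.sum_le_sum fun i _ => log_choose_le n t (m i) ht (hm i)
      _ = ((∑ i, m i : ℕ) : ℝ) * Real.log t + n := by
          rw [Finset.sum_add_distrib, ← Finset.sum_mul]
          simp [mul_div_cancel₀ _ ht0.ne']
      _ ≤ n * Real.log t + n := by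
          have : 0 ≤ Real.log t := Real.log_natCast_nonneg t
          gcongr
  simp only [Real.logb]
  rw [← Finset.sum_div, div_le_iff₀ (by linarith)]
  have : (n : ℝ) * (Real.log t / Real.log 2 + 2) * Real.log 2
      = n * Real.log t + n * (2 * Real.log 2) := by
    field_simp
  rw [this]
  have : (n : ℝ) * 1 ≤ n * (2 * Real.log 2) := by
    gcongr
    linarith
  linarith
end

section
/- For every natural number k ≥ 1 and all natural numbers l ≤ r with r < 2^k, there exists a finite set D of pairs (i, m) with i ≤ k and m < 2^i such that: the dyadic intervals Ico(m·2^{k−i}, (m+1)·2^{k−i}) for (i,m) ∈ D are pairwise disjoint; their union equals the set of integers Icc(l, r); for each level i there are at most two pairs in D with first coordinate i; and |D| ≤ 2k. (Any consecutive range of leaves of a complete binary tree with 2^k leaves is covered by a disjoint union of at most 2k subtrees, at most two maximal subtrees per level.) -/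
/-!
The cover is built from the leaves upwards. For a half-open range `[a, b)` of leaves at depth
`k + 1`, the leaves whose sibling is also in the range are exactly those whose parent lies in
`[⌈a/2⌉, ⌊b/2⌋)`; at most two leaves, necessarily `a` or `b - 1`, remain and are taken as
singletons, while the parents form a consecutive range at depth `k`, covered by induction
(`dyadic_cover_aux`). This works smoothly because leaf `x` lies below node `(i, m)` iff
`x / 2 ^ (k - i) = m` (`mem_dyadic_iff`).

For the total count, a cover containing the root contains nothing else by disjointness, so its
size is `1`; otherwise only the levels `1, …, k` occur, with at most two nodes each.
-/

lemma mem_dyadic_iff (x m t : ℕ) :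
    x ∈ Finset.Ico (m * 2 ^ t) ((m + 1) * 2 ^ t) ↔ x / 2 ^ t = m := by
  rw [Finset.mem_Ico, Nat.div_eq_iff (by positivity)]
  have : 0 < 2 ^ t := by positivity
  rw [add_mul]
  omega

/-- The cover without the bound on its size, for possibly empty half-open ranges, with
disjointness expressed as: no leaf lies below two distinct nodes of `D`. -/
lemma dyadic_cover_aux (k : ℕ) : ∀ a b : ℕ, a ≤ b → b ≤ 2 ^ k →
    ∃ D : Finset (ℕ × ℕ),
      (∀ p ∈ D, p.1 ≤ k ∧ p.2 < 2 ^ p.1) ∧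
      (∀ p ∈ D, ∀ q ∈ D, ∀ x : ℕ, x / 2 ^ (k - p.1) = p.2 → x / 2 ^ (k - q.1) = q.2 → p = q) ∧
      (∀ x : ℕ, (∃ p ∈ D, x / 2 ^ (k - p.1) = p.2) ↔ a ≤ x ∧ x < b) ∧
      (∀ i : ℕ, (D.filter (fun p => p.1 = i)).card ≤ 2) := by
  induction k with
  | zero =>
    intro a b hab hb
    rcases hab.eq_or_lt with rfl | hlt
    · exact ⟨∅, by simp⟩
    · obtain ⟨rfl, rfl⟩ : a = 0 ∧ b = 1 := by simp at hb; omega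
      refine ⟨{(0, 0)}, by simp, by simp, by simp, fun i => ?_⟩
      exact (Finset.card_filter_le _ _).trans (by simp)
  | succ k ih =>
    intro a b hab hb
    rcases hab.eq_or_lt with rfl | hlt
    · exact ⟨∅, by simp⟩
    obtain ⟨D, hD, hdis, hcov, hcard⟩ := ih ((a + 1) / 2) (b / 2) (by omega)
      (by rw [pow_succ] at hb; omega)
    -- the leaves of `[a, b)` whose sibling is outside the range
    set L : Finset ℕ :=
      ({a, b - 1} : Finset ℕ).filter (fun x => ¬ ((a + 1) / 2 ≤ x / 2 ∧ x / 2 < b / 2)) with hL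
    have memL : ∀ x, x ∈ L ↔ (a ≤ x ∧ x < b) ∧ ¬ ((a + 1) / 2 ≤ x / 2 ∧ x / 2 < b / 2) := by
      intro x
      simp only [hL, Finset.mem_filter, Finset.mem_insert, Finset.mem_singleton]
      omega
    have cardL : L.card ≤ 2 := (Finset.card_filter_le _ _).trans Finset.card_le_two
    have hstep : ∀ p ∈ D, ∀ x, x / 2 ^ (k + 1 - p.1) = (x / 2) / 2 ^ (k - p.1) := by
      intro p hp x
      rw [Nat.sub_add_comm (hD p hp).1, pow_succ', Nat.div_div_eq_div_mul]
    refine ⟨D ∪ L.image (fun x => (k + 1, x)), ?_, ?_, ?_, ?_⟩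
    · intro p hp
      rcases Finset.mem_union.1 hp with hp | hp
      · exact ⟨(hD p hp).1.trans (Nat.le_succ k), (hD p hp).2⟩
      · obtain ⟨x, hx, rfl⟩ := Finset.mem_image.1 hp
        exact ⟨le_rfl, ((memL x).1 hx).1.2.trans_le hb⟩
    · have key : ∀ p ∈ D, ∀ y ∈ L, (y : ℕ) / 2 ^ (k + 1 - p.1) = p.2 → False := by
        intro p hp y hy h
        rw [hstep p hp] at h
        exact ((memL y).1 hy).2 ((hcov _).1 ⟨p, hp, h⟩)
      intro p hp q hq x hxp hxq
      rcases Finset.mem_union.1 hp with hp | hp <;> rcases Finset.mem_union.1 hq with hq | hq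
      · rw [hstep p hp] at hxp
        rw [hstep q hq] at hxq
        exact hdis p hp q hq _ hxp hxq
      · obtain ⟨y, hy, rfl⟩ := Finset.mem_image.1 hq
        simp only [Nat.sub_self, pow_zero, Nat.div_one] at hxq
        exact (key p hp y hy (hxq ▸ hxp)).elim
      · obtain ⟨y, hy, rfl⟩ := Finset.mem_image.1 hp
        simp only [Nat.sub_self, pow_zero, Nat.div_one] at hxp
        exact (key q hq y hy (hxp ▸ hxq)).elim
      · obtain ⟨y, hy, rfl⟩ := Finset.mem_image.1 hp
        obtain ⟨z, hz, rfl⟩ := Finset.mem_image.1 hq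
        simp only [Nat.sub_self, pow_zero, Nat.div_one] at hxp hxq
        rw [← hxp, ← hxq]
    · intro x
      constructor
      · rintro ⟨p, hp, hx⟩
        rcases Finset.mem_union.1 hp with hp | hp
        · rw [hstep p hp] at hx
          have := (hcov _).1 ⟨p, hp, hx⟩
          omega
        · obtain ⟨y, hy, rfl⟩ := Finset.mem_image.1 hp
          simp only [Nat.sub_self, pow_zero, Nat.div_one] at hx
          exact hx ▸ ((memL y).1 hy).1
      · intro hx
        by_cases h : (a + 1) / 2 ≤ x / 2 ∧ x / 2 < b / 2
        · obtain ⟨p, hp, hxp⟩ := (hcov _).2 h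
          exact ⟨p, Finset.mem_union_left _ hp, by rw [hstep p hp, hxp]⟩
        · exact ⟨(k + 1, x), Finset.mem_union_right _
            (Finset.mem_image_of_mem _ ((memL x).2 ⟨hx, h⟩)), by simp⟩
    · intro i
      by_cases hi : i = k + 1
      · refine le_trans (Finset.card_le_card (t := L.image (fun x => (k + 1, x))) ?_)
          (Finset.card_image_le.trans cardL)
        intro p hp
        obtain ⟨hp, hpi⟩ := Finset.mem_filter.1 hp
        rcases Finset.mem_union.1 hp with hp | hp
        · have := (hD p hp).1
          omega
        · exact hp
      · refine le_trans (Finset.card_le_card ?_) (hcard i)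
        intro p hp
        obtain ⟨hp, hpi⟩ := Finset.mem_filter.1 hp
        rcases Finset.mem_union.1 hp with hp | hp
        · exact Finset.mem_filter.2 ⟨hp, hpi⟩
        · obtain ⟨y, hy, rfl⟩ := Finset.mem_image.1 hp
          exact (hi hpi.symm).elim

/-- Any consecutive range of leaves `Icc l r` within `[0, 2^k)` is covered by a disjoint
union of dyadic intervals (subtrees), at most two per level, and at most `2k` in total. -/
theorem dyadic_cover (k : ℕ) (hk : 1 ≤ k) (l r : ℕ) (hlr : l ≤ r) (hr : r < 2 ^ k) :
    ∃ D : Finset (ℕ × ℕ),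
      (∀ p ∈ D, p.1 ≤ k ∧ p.2 < 2 ^ p.1) ∧
      ((D : Set (ℕ × ℕ)).PairwiseDisjoint
        (fun p => Finset.Ico (p.2 * 2 ^ (k - p.1)) ((p.2 + 1) * 2 ^ (k - p.1)))) ∧
      (D.biUnion (fun p => Finset.Ico (p.2 * 2 ^ (k - p.1)) ((p.2 + 1) * 2 ^ (k - p.1)))
        = Finset.Icc l r) ∧
      (∀ i : ℕ, (D.filter (fun p => p.1 = i)).card ≤ 2) ∧
      D.card ≤ 2 * k := by
  obtain ⟨D, hD, hdis, hcov, hcard⟩ := dyadic_cover_aux k l (r + 1) (by omega) hr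
  refine ⟨D, hD, ?_, ?_, hcard, ?_⟩
  · intro p hp q hq hpq
    refine Finset.disjoint_left.2 fun x hxp hxq => hpq ?_
    exact hdis p hp q hq x ((mem_dyadic_iff _ _ _).1 hxp) ((mem_dyadic_iff _ _ _).1 hxq)
  · ext x
    simp only [Finset.mem_biUnion, mem_dyadic_iff, hcov, Finset.mem_Icc]
    omega
  · by_cases h0 : ∃ p ∈ D, p.1 = 0
    · obtain ⟨p, hp, hp0⟩ := h0
      have hone : D.card ≤ 1 := by
        refine Finset.card_le_one_iff_subset_singleton.2 ⟨p, fun q hq => ?_⟩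
        refine Finset.mem_singleton.2 (hdis q hq p hp (q.2 * 2 ^ (k - q.1)) ?_ ?_)
        · exact Nat.mul_div_cancel _ (by positivity)
        -- the leftmost leaf below `q` lies below the root `p`
        · have h1 := (hD p hp).2
          obtain ⟨h2, h3⟩ := hD q hq
          rw [hp0, pow_zero, Nat.lt_one_iff] at h1
          rw [hp0, h1, Nat.sub_zero]
          apply Nat.div_eq_of_lt
          calc q.2 * 2 ^ (k - q.1) < 2 ^ q.1 * 2 ^ (k - q.1) :=
                Nat.mul_lt_mul_of_pos_right h3 (by positivity)
            _ = 2 ^ k := by rw [← pow_add, Nat.add_sub_cancel' h2]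
      omega
    · push Not at h0
      have := Finset.card_le_mul_card_image_of_maps_to (s := D) (t := Finset.Icc 1 k)
        (f := Prod.fst) (fun p hp => Finset.mem_Icc.2
          ⟨Nat.one_le_iff_ne_zero.2 (h0 p hp), (hD p hp).1⟩) 2 (fun i _ => hcard i)
      simpa using this
end

section
/- Let n and z be natural numbers with 1 ≤ z and 2z ≤ n. Then Σ_{i=0}^{⌊log₂ z⌋} lg C(n, ⌊z/2^i⌋) ≤ 8 · lg C(n, z). (When the result bitmap of cardinality z is assembled from subtrees whose cardinalities halve down the levels, the total compressed size read is within a constant factor of the compressed size of the result itself.) -/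
/-!
Write `L m = lg C(n, m)`. Halving the cardinality shrinks `L` by a constant factor:
`L ⌊m/2⌋ ≤ (7/8) L m` whenever `2 ≤ m` and `2 m ≤ n`. Equivalently
`L ⌊m/2⌋ ≤ 8 (L m - L ⌊m/2⌋)`, and these differences telescope along `z, ⌊z/2⌋, ⌊z/4⌋, …`.

For the contraction put `k = ⌊m/2⌋` and `t = (n - k) / (2 k)`, so that `t ≥ 3/2`.
From `C(n, 2k) C(2k, k) = C(n, k) C(n-k, k)` and `C(n-k, k) ≥ t ^ k C(2k, k)` one gets
`C(n, m) ≥ C(n, 2k) ≥ t ^ k C(n, k)`. On the other hand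
`C(n, k) ≤ n ^ k / k! ≤ (3 n / k) ^ k = (6 t + 3) ^ k ≤ (t ^ 7) ^ k`, because `k! ≥ (k / e) ^ k`.
Hence `C(n, k) ^ 8 ≤ (t ^ k C(n, k)) ^ 7 ≤ C(n, m) ^ 7`.
-/

/-- The ratio `C(N, k) / C(M, k)` is at least `(N / M) ^ k` for `k ≤ M ≤ N`: each factor
`(N - j) / (M - j)` is at least `N / M`. -/
lemma pow_mul_choose_le (M N : ℕ) (hMN : M ≤ N) (k : ℕ) (hk : k ≤ M) :
    (N : ℝ) ^ k * M.choose k ≤ (M : ℝ) ^ k * N.choose k := by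
  induction k with
  | zero => simp
  | succ k ih =>
    have ih := ih (by omega)
    have h1 : ((M.choose (k + 1) : ℕ) : ℝ) * (k + 1) = M.choose k * ((M : ℝ) - k) := by
      have := Nat.choose_succ_right_eq M k
      rw [← Nat.cast_sub (by omega)]
      exact_mod_cast this
    have h2 : ((N.choose (k + 1) : ℕ) : ℝ) * (k + 1) = N.choose k * ((N : ℝ) - k) := by
      have := Nat.choose_succ_right_eq N k
      rw [← Nat.cast_sub (by omega)]
      exact_mod_cast this
    have hMN' : (M : ℝ) ≤ N := by exact_mod_cast hMN
    have hkM : (k : ℝ) + 1 ≤ M := by exact_mod_cast hk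
    have hk0 : (0 : ℝ) ≤ k := by positivity
    have h3 : (N : ℝ) * (M - k) ≤ M * (N - k) := by nlinarith
    have hpos : (0 : ℝ) < k + 1 := by positivity
    refine le_of_mul_le_mul_right ?_ hpos
    calc (N : ℝ) ^ (k + 1) * M.choose (k + 1) * (k + 1)
        = ((N : ℝ) ^ k * M.choose k) * (N * (M - k)) := by
          rw [mul_assoc, h1]; ring
      _ ≤ ((M : ℝ) ^ k * N.choose k) * (M * (N - k)) := by
          apply mul_le_mul ih h3 _ (by positivity)
          exact mul_nonneg (by positivity) (by linarith)
      _ = (M : ℝ) ^ (k + 1) * N.choose (k + 1) * (k + 1) := by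
          rw [mul_assoc _ _ ((k : ℝ) + 1), h2]; ring

lemma choose_le_three_mul_div_pow (n k : ℕ) (hk : 1 ≤ k) :
    (n.choose k : ℝ) ≤ (3 * n / k) ^ k := by
  have hk0 : (0 : ℝ) < k := by exact_mod_cast hk
  have h1 : (n.choose k : ℝ) ≤ (n : ℝ) ^ k / k.factorial := Nat.choose_le_pow_div k n
  have h2 : (k : ℝ) ^ k / k.factorial ≤ 3 ^ k := by
    calc (k : ℝ) ^ k / k.factorial ≤ Real.exp k := Real.pow_div_factorial_le_exp _ hk0.le k
      _ = Real.exp 1 ^ k := by rw [← Real.exp_nat_mul, mul_one]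
      _ ≤ 3 ^ k := by
        gcongr
        linarith [Real.exp_one_lt_d9]
  calc (n.choose k : ℝ) ≤ (n : ℝ) ^ k / k.factorial := h1
    _ = (n / k : ℝ) ^ k * ((k : ℝ) ^ k / k.factorial) := by
      rw [div_pow]; field_simp
    _ ≤ (n / k : ℝ) ^ k * 3 ^ k := by gcongr
    _ = (3 * n / k) ^ k := by rw [← mul_pow]; ring

/-- Passing from `k` to `2 k` multiplies the binomial coefficient by at least
`((n - k) / (2 k)) ^ k`. -/
lemma pow_mul_choose_le_choose_two_mul (n k : ℕ) (hk : 1 ≤ k) (hn : 4 * k ≤ n) :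
    (((n : ℝ) - k) / (2 * k)) ^ k * n.choose k ≤ n.choose (2 * k) := by
  have hk0 : (0 : ℝ) < k := by exact_mod_cast hk
  have h1 : ((n.choose (2 * k) : ℕ) : ℝ) * (2 * k).choose k
      = n.choose k * (n - k).choose k := by
    have := Nat.choose_mul (n := n) (k := 2 * k) (s := k) (by omega)
    rw [show 2 * k - k = k by omega] at this
    exact_mod_cast this
  have h2 := pow_mul_choose_le (2 * k) (n - k) (by omega) k (by omega)
  rw [Nat.cast_sub (by omega)] at h2
  push_cast at h2
  have hc : (0 : ℝ) < (2 * k).choose k := by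
    exact_mod_cast Nat.choose_pos (by omega)
  refine le_of_mul_le_mul_right ?_ hc
  rw [h1, div_pow]
  have h3 : ((n : ℝ) - k) ^ k / (2 * k) ^ k * (2 * k).choose k ≤ (n - k).choose k := by
    rw [div_mul_eq_mul_div, div_le_iff₀ (by positivity)]
    linarith
  calc _ = (n.choose k : ℝ) * (((n : ℝ) - k) ^ k / (2 * k) ^ k * (2 * k).choose k) := by ring
    _ ≤ _ := by gcongr

lemma choose_half_pow_le (n m : ℕ) (hm : 2 ≤ m) (hn : 2 * m ≤ n) :
    (n.choose (m / 2) : ℝ) ^ 8 ≤ (n.choose m : ℝ) ^ 7 := by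
  obtain ⟨k, hk⟩ : ∃ k, k = m / 2 := ⟨_, rfl⟩
  rw [← hk]
  have hk1 : 1 ≤ k := by omega
  have hk0 : (0 : ℝ) < k := by exact_mod_cast hk1
  have hn4 : (4 : ℝ) * k ≤ n := by
    have : 4 * k ≤ n := by omega
    exact_mod_cast this
  have hmono : (n.choose (2 * k) : ℝ) ≤ n.choose m := by
    have : n.choose (2 * k) ≤ n.choose m := by
      rcases (by omega : m = 2 * k ∨ m = 2 * k + 1) with h | h
      · rw [h]
      · rw [h]
        exact Nat.choose_le_succ_of_lt_half_left (by omega)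
    exact_mod_cast this
  obtain ⟨t, ht⟩ : ∃ t : ℝ, t = ((n : ℝ) - k) / (2 * k) := ⟨_, rfl⟩
  have ht1 : 3 / 2 ≤ t := by
    rw [ht, le_div_iff₀ (by positivity)]
    linarith
  have hlow : t ^ k * n.choose k ≤ n.choose (2 * k) := by
    rw [ht]
    exact pow_mul_choose_le_choose_two_mul n k hk1 (by omega)
  have h6 : (3 * n / k : ℝ) = 6 * t + 3 := by
    rw [ht]; field_simp; ring
  -- `6 t + 3 ≤ 8 t ≤ (3 / 2) ^ 6 t ≤ t ^ 7`
  have h7 : 6 * t + 3 ≤ t ^ 7 := by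
    have : (3 / 2 : ℝ) ^ 6 ≤ t ^ 6 := by gcongr
    have h8 : (3 / 2 : ℝ) ^ 6 * t ≤ t ^ 6 * t := by gcongr
    calc 6 * t + 3 ≤ (3 / 2 : ℝ) ^ 6 * t := by norm_num; linarith
      _ ≤ t ^ 6 * t := h8
      _ = t ^ 7 := by ring
  have hup : (n.choose k : ℝ) ≤ (t ^ k) ^ 7 := by
    calc (n.choose k : ℝ) ≤ (3 * n / k) ^ k := choose_le_three_mul_div_pow n k hk1
      _ = (6 * t + 3) ^ k := by rw [h6]
      _ ≤ (t ^ 7) ^ k := by gcongr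
      _ = (t ^ k) ^ 7 := by rw [← pow_mul, ← pow_mul, mul_comm]
  calc (n.choose k : ℝ) ^ 8 = n.choose k * (n.choose k : ℝ) ^ 7 := by ring
    _ ≤ (t ^ k) ^ 7 * (n.choose k : ℝ) ^ 7 := by gcongr
    _ = (t ^ k * n.choose k) ^ 7 := by rw [mul_pow]
    _ ≤ (n.choose m : ℝ) ^ 7 := by
      gcongr
      exact hlow.trans hmono

lemma logb_choose_half_le (n m : ℕ) (hm : 2 ≤ m) (hn : 2 * m ≤ n) :
    8 * Real.logb 2 (n.choose (m / 2)) ≤ 7 * Real.logb 2 (n.choose m) := by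
  have hpos : (0 : ℝ) < n.choose (m / 2) := by
    exact_mod_cast Nat.choose_pos (by omega)
  have h := Real.logb_le_logb_of_le (b := 2) (by norm_num) (by positivity)
    (choose_half_pow_le n m hm hn)
  rw [Real.logb_pow, Real.logb_pow] at h
  exact_mod_cast h

/-- Assembling a result bitmap of cardinality `z` from subtrees whose cardinalities halve
down the levels reads at most a constant factor more than the compressed result size. -/
theorem halving_sum_lg_choose (n z : ℕ) (hz : 1 ≤ z) (hn : 2 * z ≤ n) :
    ∑ i ∈ Finset.range (Nat.log 2 z + 1), Real.logb 2 (Nat.choose n (z / 2 ^ i)) ≤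
      8 * Real.logb 2 (Nat.choose n z) := by
  -- the telescoped form of the contraction
  have key : ∀ j, j ≤ Nat.log 2 z →
      ∑ i ∈ Finset.range j, Real.logb 2 (n.choose (z / 2 ^ i))
        + 8 * Real.logb 2 (n.choose (z / 2 ^ j)) ≤ 8 * Real.logb 2 (n.choose z) := by
    intro j
    induction j with
    | zero => simp
    | succ j ih =>
      intro hj
      have ih := ih (by omega)
      have hpow : 2 ^ (j + 1) ≤ z := Nat.pow_le_of_le_log (by omega) hj
      have h2 : 2 ≤ z / 2 ^ j := by
        rw [Nat.le_div_iff_mul_le (by positivity)]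
        rw [pow_succ] at hpow
        omega
      have hle : z / 2 ^ j ≤ z := Nat.div_le_self _ _
      have hstep := logb_choose_half_le n (z / 2 ^ j) h2 (by omega)
      rw [Nat.div_div_eq_div_mul, ← pow_succ] at hstep
      rw [Finset.sum_range_succ]
      linarith
  have hlast := key _ le_rfl
  have hnonneg : 0 ≤ Real.logb 2 (n.choose (z / 2 ^ Nat.log 2 z)) := by
    apply Real.logb_nonneg (by norm_num)
    have hle : z / 2 ^ Nat.log 2 z ≤ z := Nat.div_le_self _ _
    exact_mod_cast Nat.choose_pos (by omega)
  rw [Finset.sum_range_succ]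
  linarith
end

section
/- Let n ≥ 16 and m ≥ 1 be natural numbers and set k = ⌊log₂⌊log₂ n⌋⌋. Then Σ_{j=1}^{k} lg C(2^{2^j}, m) ≤ 4 · m · lg n. (Storing, for a set of m positions out of n, compressed bitmaps of its images under hash functions into universes of sizes 2^{2^1}, 2^{2^2}, …, 2^{2^k} costs O(m lg n) bits in total.) -/
/-!
Since `C(N, m) ≤ N ^ m`, the `j`-th summand is at most `m * 2 ^ j`. The geometric sum of `2 ^ j`
over `1 ≤ j ≤ k` is at most `2 * 2 ^ k`, and `2 ^ k ≤ ⌊lg n⌋ ≤ lg n` by the choice of `k`.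
This already gives the bound with constant `2`.
-/

theorem logb_choose_two_pow_le (a m : ℕ) :
    Real.logb 2 (Nat.choose (2 ^ a) m) ≤ (m : ℝ) * a := by
  rcases Nat.eq_zero_or_pos (Nat.choose (2 ^ a) m) with h | h
  · -- Here `2 ^ a < m`, and `logb 2 0 = 0`.
    rw [h, Nat.cast_zero, Real.logb_zero]
    positivity
  · have hle : ((Nat.choose (2 ^ a) m : ℕ) : ℝ) ≤ (2 : ℝ) ^ (a * m) := by
      rw [pow_mul]
      exact_mod_cast Nat.choose_le_pow (2 ^ a) m
    calc Real.logb 2 (Nat.choose (2 ^ a) m)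
        ≤ Real.logb 2 ((2 : ℝ) ^ (a * m)) :=
          Real.logb_le_logb_of_le one_lt_two (by exact_mod_cast h) hle
      _ = (m : ℝ) * a := by
          rw [Real.logb_pow, Real.logb_self_eq_one one_lt_two]
          push_cast
          ring

theorem sum_two_pow_Icc_le (k : ℕ) : ∑ j ∈ Finset.Icc 1 k, (2 : ℝ) ^ j ≤ 2 * 2 ^ k := by
  induction k with
  | zero => simp
  | succ k ih =>
    rw [Finset.sum_Icc_succ_top (by omega), pow_succ]
    linarith

/-- Storing compressed bitmaps of the images of a set of `m` positions out of `n` under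
hash functions into universes of sizes `2^{2^1}, …, 2^{2^k}` with `k = ⌊lg lg n⌋` costs
at most `4·m·lg n` bits in total. -/
theorem hashed_sets_total_space (n m : ℕ) (hn : 16 ≤ n) (hm : 1 ≤ m) :
    ∑ j ∈ Finset.Icc 1 (Nat.log 2 (Nat.log 2 n)),
        Real.logb 2 (Nat.choose (2 ^ (2 ^ j)) m) ≤ 4 * (m : ℝ) * Real.logb 2 (n : ℝ) := by
  have hlog : Nat.log 2 n ≠ 0 := (Nat.log_pos one_lt_two (by omega)).ne'
  have hk : (2 : ℝ) ^ Nat.log 2 (Nat.log 2 n) ≤ Real.logb 2 n :=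
    calc (2 : ℝ) ^ Nat.log 2 (Nat.log 2 n)
        ≤ (Nat.log 2 n : ℝ) := by exact_mod_cast Nat.pow_log_le_self 2 hlog
      _ ≤ Real.logb 2 n := by exact_mod_cast Real.natLog_le_logb n 2
  have hpos : (0 : ℝ) ≤ Real.logb 2 n := le_trans (by positivity) hk
  calc ∑ j ∈ Finset.Icc 1 (Nat.log 2 (Nat.log 2 n)), Real.logb 2 (Nat.choose (2 ^ (2 ^ j)) m)
      ≤ ∑ j ∈ Finset.Icc 1 (Nat.log 2 (Nat.log 2 n)), (m : ℝ) * 2 ^ j :=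
        Finset.sum_le_sum fun j _ => by simpa using logb_choose_two_pow_le (2 ^ j) m
    _ = m * ∑ j ∈ Finset.Icc 1 (Nat.log 2 (Nat.log 2 n)), (2 : ℝ) ^ j := by
        rw [Finset.mul_sum]
    _ ≤ m * (4 * Real.logb 2 n) := by
        gcongr
        linarith [sum_two_pow_Icc_le (Nat.log 2 (Nat.log 2 n))]
    _ = 4 * (m : ℝ) * Real.logb 2 n := by ring
end

section
/- Let w ≥ 1 and l ≤ r be natural numbers. Then there exist a finite set Q of bin indices and a finite set L of leftover positions such that: for every q ∈ Q the complete bin Ico(q·w, q·w + w) is contained in Icc(l, r); the bins for distinct q ∈ Q are pairwise disjoint and disjoint from L; the union of the bins over Q together with L equals Icc(l, r); |Q| ≤ (r − l + 1)/w; and |L| ≤ 2(w − 1). (With binning into bins of w consecutive characters, a range query of length ℓ = r − l + 1 is answered by combining fewer than ⌊ℓ/w⌋ + 2w compressed bitmaps: at most ⌊ℓ/w⌋ whole-bin bitmaps plus at most 2w − 2 single-character bitmaps at the boundaries.) -/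
/-!
Take `Q = {q | ⌈l / w⌉ ≤ q < ⌊(r + 1) / w⌋}`, the indices of the bins lying inside `[l, r]`, and let
`L` be the part of `[l, r]` that these bins miss. Writing `a` and `b` for the two bounds, the bins
over `Q` tile `[a * w, b * w)`, so `L` lies in `[l, a * w) ∪ [b * w, r + 1)`. Each of these intervals
has length at most `w - 1`, by the definition of ceiling and floor. The inclusion also holds when
`b < a`, so no case distinction is needed.
-/

/-- With bins of `w` consecutive characters, the range `Icc l r` is the disjoint union of
at most `(r - l + 1)/w` whole bins plus at most `2(w-1)` leftover positions. -/
theorem binning_cover (w l r : ℕ) (hw : 1 ≤ w) (hlr : l ≤ r) :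
    ∃ (Q L : Finset ℕ),
      (∀ q ∈ Q, Finset.Ico (q * w) (q * w + w) ⊆ Finset.Icc l r) ∧
      ((Q : Set ℕ).PairwiseDisjoint (fun q => Finset.Ico (q * w) (q * w + w))) ∧
      (∀ q ∈ Q, Disjoint (Finset.Ico (q * w) (q * w + w)) L) ∧
      ((Q.biUnion (fun q => Finset.Ico (q * w) (q * w + w))) ∪ L = Finset.Icc l r) ∧
      Q.card ≤ (r - l + 1) / w ∧
      L.card ≤ 2 * (w - 1) := by
  obtain ⟨a, ha₁, ha₂⟩ : ∃ a, l ≤ a * w ∧ a * w ≤ l + (w - 1) := by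
    refine ⟨(l + (w - 1)) / w, ?_, Nat.div_mul_le_self _ _⟩
    have := Nat.lt_div_mul_add (a := l + (w - 1)) hw
    omega
  obtain ⟨b, hb₁, hb₂⟩ : ∃ b, b * w ≤ r + 1 ∧ r + 1 ≤ b * w + (w - 1) := by
    refine ⟨(r + 1) / w, Nat.div_mul_le_self _ _, ?_⟩
    have := Nat.lt_div_mul_add (a := r + 1) hw
    omega
  have hsub : ∀ q ∈ Finset.Ico a b,
      Finset.Ico (q * w) (q * w + w) ⊆ Finset.Icc l r := by
    intro q hq x hx
    rw [Finset.mem_Ico] at hq hx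
    have h₁ : a * w ≤ q * w := Nat.mul_le_mul_right w hq.1
    have h₂ : (q + 1) * w ≤ b * w := Nat.mul_le_mul_right w hq.2
    rw [Nat.succ_mul] at h₂
    rw [Finset.mem_Icc]
    omega
  -- The bin containing `x` is the one with index `x / w`.
  have hbin : ∀ q x, x ∈ Finset.Ico (q * w) (q * w + w) ↔ x / w = q := by
    intro q x
    rw [Finset.mem_Ico, Nat.div_eq_iff hw]
    omega
  refine ⟨Finset.Ico a b, Finset.Icc l r \
    (Finset.Ico a b).biUnion (fun q => Finset.Ico (q * w) (q * w + w)),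
    hsub, ?_, ?_, ?_, ?_, ?_⟩
  · intro p _ q _ hpq
    refine Finset.disjoint_left.2 fun x hp hq => hpq ?_
    exact ((hbin p x).1 hp).symm.trans ((hbin q x).1 hq)
  · intro q hq
    exact Finset.disjoint_sdiff.mono_left
      (Finset.subset_biUnion_of_mem (fun q => Finset.Ico (q * w) (q * w + w)) hq)
  · exact Finset.union_sdiff_of_subset (Finset.biUnion_subset.2 hsub)
  · rw [Nat.card_Ico, Nat.le_div_iff_mul_le hw, Nat.sub_mul]
    omega
  · have hL : Finset.Icc l r \
        (Finset.Ico a b).biUnion (fun q => Finset.Ico (q * w) (q * w + w)) ⊆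
        Finset.Ico l (a * w) ∪ Finset.Ico (b * w) (r + 1) := by
      intro x hx
      rw [Finset.mem_sdiff, Finset.mem_Icc, Finset.mem_biUnion] at hx
      obtain ⟨hx, hn⟩ := hx
      rw [Finset.mem_union, Finset.mem_Ico, Finset.mem_Ico]
      by_contra hc
      refine hn ⟨x / w, Finset.mem_Ico.2 ⟨?_, ?_⟩, (hbin _ _).2 rfl⟩
      · rw [Nat.le_div_iff_mul_le hw]
        omega
      · rw [Nat.div_lt_iff_lt_mul hw]
        omega
    refine (Finset.card_le_card hL).trans ((Finset.card_union_le _ _).trans ?_)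
    rw [Nat.card_Ico, Nat.card_Ico]
    omega
end
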